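/- Let $k(t) = \frac{\sqrt{1-t}}{4\sqrt{2}\pi}$ on $[-1,1]$. Then the spherical convolution $k * k$ on $S^3$, defined by $(k*k)(x\cdot z) = \int_{S^3} k(x\cdot y)k(y\cdot z)\, d\mu(y)$, is a $C^1$ function on $[-1,1]$. -/

import Mathlib

open MeasureTheory Metric Set Real
open scoped RealInnerProductSpace

noncomputable section

/-- `k(t) = √(1-t) / (4√2 π)`, the single variable function of the kernel
`K(x,y) = ‖x-y‖/(8π)` on `S³`. -/
def kfun (t : ℝ) : ℝ := Real.sqrt (1 - t) / (4 * Real.sqrt 2 * π)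

/-- A fixed point of `S³` and, for `t ∈ [-1,1]`, a point `c t ∈ S³` with `a · c t = t`. -/
def aPt : EuclideanSpace ℝ (Fin 4) := EuclideanSpace.single 0 1

def cPt (t : ℝ) : EuclideanSpace ℝ (Fin 4) :=
  t • EuclideanSpace.single 0 1 + Real.sqrt (1 - t ^ 2) • EuclideanSpace.single 1 1

/-- The spherical convolution `k * k` on `S³`: `(k*k)(t) = ∫_{S³} k(x·y) k(y·z) dμ(y)`
for any `x, z ∈ S³` with `x·z = t` (here realized with `x = aPt`, `z = cPt t`). -/
def kConvK (t : ℝ) : ℝ :=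
  ∫ y in sphere (0 : EuclideanSpace ℝ (Fin 4)) 1, kfun ⟪aPt, y⟫ * kfun ⟪y, cPt t⟫ ∂μH[(3 : ℝ)]

/-!
The kernel is `k (x · y) = ‖x - y‖ / (8 π)`, so up to a constant `k * k` is the function
`F t = ∫ ‖u - y‖ ‖y - c t‖` for the arc `c t = t u + √(1 - t²) v`, whose velocity is
`-e t / √(1 - t²)` with `e t` a unit vector orthogonal to `c t`. Differentiating under the integral
sign gives `F' t = (√(1 - t²))⁻¹ ∫ ‖u - y‖ ⟪e t, y⟫ / ‖y - c t‖`. Now the reflection in the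
hyperplane orthogonal to `e t` fixes `c t` and changes the sign of `⟪e t, y⟫`; averaging the
integrand over it replaces `‖u - y‖` by half the difference of the distances from `u` to `y` and to
its mirror image, which contains the factor `⟪e t, u⟫ = -√(1 - t²)`. This cancels the singular
factor and leaves a kernel bounded by `1 / 2`, so by dominated convergence `F'` extends continuously
to `[-1, 1]`.
-/

open Module

theorem contDiffOn_one_closure_of_hasFDerivAt {E F : Type*} [NormedAddCommGroup E]
    [NormedSpace ℝ E] [NormedAddCommGroup F] [NormedSpace ℝ F] {s : Set E} {f : E → F}
    {f' : E → E →L[ℝ] F} (hs : Convex ℝ s) (hso : IsOpen s) (hf : ContinuousOn f (closure s))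
    (hf' : ContinuousOn f' (closure s)) (h : ∀ x ∈ s, HasFDerivAt f (f' x) x) :
    ContDiffOn ℝ 1 f (closure s) := by
  have hderiv (x : E) (hx : x ∈ closure s) : HasFDerivWithinAt f (f' x) (closure s) x := by
    refine hasFDerivWithinAt_closure_of_tendsto_fderiv
      (fun y hy => (h y hy).differentiableAt.differentiableWithinAt) hs hso
      (fun y hy => (hf y hy).mono subset_closure) ?_
    refine Filter.Tendsto.congr' ?_ ((hf' x hx).mono subset_closure)
    filter_upwards [self_mem_nhdsWithin] with y hy using (h y hy).fderiv.symm
  refine (contDiffOn_succ_iff_hasFDerivWithinAt (n := 0) (by simp)).2 fun x hx => ?_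
  rw [insert_eq_of_mem hx]
  exact ⟨closure s, self_mem_nhdsWithin, by simp, f', hderiv, contDiffOn_zero.2 hf'⟩

theorem contDiffOn_one_Icc_of_hasDerivAt {F : Type*} [NormedAddCommGroup F] [NormedSpace ℝ F]
    {a b : ℝ} {f f' : ℝ → F} (hab : a ≠ b) (hf : ContinuousOn f (Icc a b))
    (hf' : ContinuousOn f' (Icc a b)) (h : ∀ t ∈ Ioo a b, HasDerivAt f (f' t) t) :
    ContDiffOn ℝ 1 f (Icc a b) := by
  rw [← closure_Ioo hab] at hf hf' ⊢
  exact contDiffOn_one_closure_of_hasFDerivAt (convex_Ioo a b) isOpen_Ioo hf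
    ((ContinuousLinearMap.toSpanSingletonCLE ..).continuous.comp_continuousOn hf')
    fun t ht => (h t ht).hasFDerivAt

section Sphere

variable {E : Type*} [NormedAddCommGroup E] [MeasurableSpace E] [BorelSpace E]

theorem hausdorffMeasure_image_lt_top_of_contDiff {F : Type*} [NormedAddCommGroup F]
    [NormedSpace ℝ F] [FiniteDimensional ℝ F] [MeasurableSpace F] [BorelSpace F]
    [NormedSpace ℝ E] {K : Set F} {f : F → E} (hK : IsCompact K) (hf : ContDiff ℝ 1 f) :
    μH[finrank ℝ F] (f '' K) < ⊤ := by
  obtain ⟨C, hC⟩ := hf.locallyLipschitz.locallyLipschitzOn.exists_lipschitzOnWith_of_compact hK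
  refine (hC.hausdorffMeasure_image_le (Nat.cast_nonneg _)).trans_lt (ENNReal.mul_lt_top ?_ ?_)
  · simp
  · exact hK.measure_lt_top

variable [InnerProductSpace ℝ E]

theorem measurePreserving_restrict_unitSphere (R : E ≃ₗᵢ[ℝ] E) (d : ℝ) :
    MeasurePreserving R (μH[d].restrict (sphere (0 : E) 1))
      (μH[d].restrict (sphere (0 : E) 1)) := by
  have h := (R.toIsometryEquiv.measurePreserving_hausdorffMeasure d).restrict_preimage
    (isClosed_sphere (x := (0 : E)) (ε := 1)).measurableSet
  have hpre : R ⁻¹' sphere (0 : E) 1 = sphere 0 1 := by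
    ext y
    simp
  simpa [hpre] using h

variable [FiniteDimensional ℝ E]

theorem hausdorffMeasure_hemisphere_lt_top {n : ℕ} (hn : finrank ℝ E = n + 1) {v : E}
    (hv : ‖v‖ = 1) : μH[n] (sphere (0 : E) 1 ∩ {x | ⟪v, x⟫ ≤ 0}) < ⊤ := by
  have : Fact (finrank ℝ E = n + 1) := ⟨hn⟩
  set H := sphere (0 : E) 1 ∩ {x | ⟪v, x⟫ ≤ 0}
  have hH : IsCompact H :=
    (isCompact_sphere 0 1).inter_right (isClosed_le (by fun_prop) continuous_const)
  have hproj : IsCompact (stereoToFun v '' H) :=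
    hH.image_of_continuousOn <| continuousOn_stereoToFun.mono fun x hx =>
      (hx.2.trans_lt one_pos).ne
  have hsub : H ⊆ (fun w : (ℝ ∙ v)ᗮ => stereoInvFunAux v w) '' (stereoToFun v '' H) := by
    intro x hx
    have hxv : x ≠ v := by
      rintro rfl
      norm_num [H, hv] at hx
    exact ⟨_, mem_image_of_mem _ hx,
      congrArg Subtype.val (stereo_left_inv hv (x := ⟨x, hx.1⟩) hxv)⟩
  have hv0 : v ≠ 0 := norm_ne_zero_iff.1 (hv ▸ one_ne_zero)
  rw [← Submodule.finrank_orthogonal_span_singleton (𝕜 := ℝ) (n := n) hv0]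
  refine (measure_mono hsub).trans_lt
    (hausdorffMeasure_image_lt_top_of_contDiff hproj ?_)
  exact contDiff_stereoInvFunAux.comp (ℝ ∙ v)ᗮ.subtypeL.contDiff

theorem hausdorffMeasure_unitSphere_lt_top {n : ℕ} (hn : finrank ℝ E = n + 1) :
    μH[n] (sphere (0 : E) 1) < ⊤ := by
  have : Nontrivial E := Module.nontrivial_of_finrank_pos (R := ℝ) (by lia)
  obtain ⟨v, hv⟩ := exists_norm_eq E zero_le_one
  refine (measure_mono fun x hx => ?_).trans_lt (measure_union_lt_top
    (hausdorffMeasure_hemisphere_lt_top hn hv)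
    (hausdorffMeasure_hemisphere_lt_top hn ((norm_neg v).trans hv)))
  rcases le_total ⟪v, x⟫ 0 with h | h
  · exact Or.inl ⟨hx, h⟩
  · exact Or.inr ⟨hx, by simpa using h⟩

end Sphere

section Reflection

variable {E : Type*} [NormedAddCommGroup E] [InnerProductSpace ℝ E] {u c e : E}

theorem reflection_orthogonal_span_singleton_apply (he : ‖e‖ = 1) (y : E) :
    (ℝ ∙ e)ᗮ.reflection y = y - (2 * ⟪e, y⟫) • e := by
  rw [Submodule.reflection_orthogonal_apply, Submodule.reflection_apply,
    Submodule.starProjection_unit_singleton ℝ he, neg_sub, two_nsmul, two_mul,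
    add_smul]

theorem inner_reflection_orthogonal_span_singleton (e y : E) :
    ⟪e, (ℝ ∙ e)ᗮ.reflection y⟫ = -⟪e, y⟫ := by
  rw [← LinearIsometryEquiv.inner_map_map (ℝ ∙ e)ᗮ.reflection, Submodule.reflection_reflection,
    Submodule.reflection_orthogonalComplement_singleton_eq_neg, inner_neg_left]

theorem norm_reflection_orthogonal_span_singleton_sub (hc : ⟪e, c⟫ = 0) (y : E) :
    ‖(ℝ ∙ e)ᗮ.reflection y - c‖ = ‖y - c‖ := by
  have hfix : (ℝ ∙ e)ᗮ.reflection c = c :=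
    Submodule.reflection_mem_subspace_eq_self
      (Submodule.mem_orthogonal_singleton_iff_inner_right.2 hc)
  rw [← LinearIsometryEquiv.norm_map (ℝ ∙ e)ᗮ.reflection (y - c), map_sub, hfix]

theorem abs_inner_le_norm_sub_of_inner_eq_zero (he : ‖e‖ = 1) (hc : ⟪e, c⟫ = 0) (y : E) :
    |⟪e, y⟫| ≤ ‖y - c‖ := by
  simpa [he, inner_sub_right, hc] using abs_real_inner_le_norm e (y - c)

theorem two_mul_abs_inner_le_norm_sub_add_norm_sub_reflection (he : ‖e‖ = 1) (u y : E) :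
    2 * |⟪e, y⟫| ≤ ‖u - y‖ + ‖u - (ℝ ∙ e)ᗮ.reflection y‖ :=
  calc 2 * |⟪e, y⟫| = ‖y - (ℝ ∙ e)ᗮ.reflection y‖ := by
        simp [reflection_orthogonal_span_singleton_apply he, norm_smul, he]
    _ ≤ ‖y - u‖ + ‖u - (ℝ ∙ e)ᗮ.reflection y‖ := norm_sub_le_norm_sub_add_norm_sub _ _ _
    _ = ‖u - y‖ + ‖u - (ℝ ∙ e)ᗮ.reflection y‖ := by rw [norm_sub_rev]

theorem norm_sub_sq_sub_norm_sub_reflection_sq (he : ‖e‖ = 1) (u y : E) :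
    ‖u - y‖ ^ 2 - ‖u - (ℝ ∙ e)ᗮ.reflection y‖ ^ 2 = -(4 * ⟪e, u⟫ * ⟪e, y⟫) := by
  rw [norm_sub_sq_real, norm_sub_sq_real, LinearIsometryEquiv.norm_map,
    reflection_orthogonal_span_singleton_apply he, inner_sub_right, real_inner_smul_right,
    real_inner_comm e u]
  ring

/-- The kernel left over when `‖u - y‖ * (⟪e, y⟫ / ‖y - c‖)` is averaged over the reflection in the
hyperplane orthogonal to `e` and the factor `-2 * ⟪e, u⟫` is removed. -/
def reflectionKernel (u c e y : E) : ℝ :=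
  ⟪e, y⟫ ^ 2 / (‖y - c‖ * (‖u - y‖ + ‖u - (ℝ ∙ e)ᗮ.reflection y‖))

theorem norm_reflectionKernel_le (he : ‖e‖ = 1) (hc : ⟪e, c⟫ = 0) (u y : E) :
    ‖reflectionKernel u c e y‖ ≤ 1 / 2 := by
  have hyc := abs_inner_le_norm_sub_of_inner_eq_zero he hc y
  have hyu := two_mul_abs_inner_le_norm_sub_add_norm_sub_reflection he u y
  rw [reflectionKernel, Real.norm_of_nonneg (by positivity)]
  refine div_le_of_le_mul₀ (by positivity) (by norm_num) ?_
  rw [← sq_abs]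
  nlinarith [mul_le_mul hyc hyu (by positivity) (norm_nonneg _)]

theorem norm_sub_mul_add_norm_sub_mul_reflection (he : ‖e‖ = 1) (hc : ⟪e, c⟫ = 0) (u y : E) :
    ‖u - y‖ * (⟪e, y⟫ / ‖y - c‖) + ‖u - (ℝ ∙ e)ᗮ.reflection y‖ *
      (⟪e, (ℝ ∙ e)ᗮ.reflection y⟫ / ‖(ℝ ∙ e)ᗮ.reflection y - c‖) =
    -(4 * ⟪e, u⟫) * reflectionKernel u c e y := by
  rw [inner_reflection_orthogonal_span_singleton, norm_reflection_orthogonal_span_singleton_sub hc,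
    reflectionKernel]
  have hsq := norm_sub_sq_sub_norm_sub_reflection_sq he u y
  set p := ‖u - y‖
  set q := ‖u - (ℝ ∙ e)ᗮ.reflection y‖
  have hpq : p - q = -(4 * ⟪e, u⟫) * (⟪e, y⟫ / (p + q)) := by
    rcases eq_or_ne (p + q) 0 with h0 | h0
    · have hp : 0 ≤ p := norm_nonneg _
      have hq : 0 ≤ q := norm_nonneg _
      rw [h0, div_zero]
      linarith
    · field_simp
      linear_combination hsq
  calc p * (⟪e, y⟫ / ‖y - c‖) + q * (-⟪e, y⟫ / ‖y - c‖)
      = (p - q) * (⟪e, y⟫ / ‖y - c‖) := by ring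
    _ = -(4 * ⟪e, u⟫) * (⟪e, y⟫ ^ 2 / (‖y - c‖ * (p + q))) := by
      rw [hpq, mul_assoc, div_mul_div_comm, ← sq, mul_comm (p + q)]

variable [MeasurableSpace E] [BorelSpace E] [SecondCountableTopology E] {μ : Measure E}

theorem integrable_norm_sub_mul_inner_div_norm_sub (he : ‖e‖ = 1) (hc : ⟪e, c⟫ = 0)
    (hu : Integrable (fun y => ‖u - y‖) μ) :
    Integrable (fun y => ‖u - y‖ * (⟪e, y⟫ / ‖y - c‖)) μ := by
  refine hu.mul_bdd (c := 1) (Measurable.aestronglyMeasurable (by fun_prop))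
    (.of_forall fun y => ?_)
  rw [norm_div, norm_norm]
  exact div_le_one_of_le₀ (abs_inner_le_norm_sub_of_inner_eq_zero he hc y) (norm_nonneg _)

theorem integral_norm_sub_mul_inner_div_norm_sub (he : ‖e‖ = 1) (hc : ⟪e, c⟫ = 0)
    (hμ : MeasurePreserving (ℝ ∙ e)ᗮ.reflection μ μ) (hu : Integrable (fun y => ‖u - y‖) μ) :
    ∫ y, ‖u - y‖ * (⟪e, y⟫ / ‖y - c‖) ∂μ = -(2 * ⟪e, u⟫) * ∫ y, reflectionKernel u c e y ∂μ := by
  set Q : E → ℝ := fun y => ‖u - y‖ * (⟪e, y⟫ / ‖y - c‖)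
  have hQ : Integrable Q μ := integrable_norm_sub_mul_inner_div_norm_sub he hc hu
  have hQR : ∫ y, Q ((ℝ ∙ e)ᗮ.reflection y) ∂μ = ∫ y, Q y ∂μ :=
    hμ.integral_comp (ℝ ∙ e)ᗮ.reflection.toHomeomorph.measurableEmbedding Q
  have hsum : ∫ y, Q y ∂μ + ∫ y, Q ((ℝ ∙ e)ᗮ.reflection y) ∂μ =
      -(4 * ⟪e, u⟫) * ∫ y, reflectionKernel u c e y ∂μ := by
    have hQR_int : Integrable (fun y => Q ((ℝ ∙ e)ᗮ.reflection y)) μ :=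
      hμ.integrable_comp_of_integrable hQ
    rw [← integral_const_mul, ← integral_add hQ hQR_int]
    exact integral_congr_ae
      (.of_forall fun y => norm_sub_mul_add_norm_sub_mul_reflection he hc u y)
  linarith

theorem continuousOn_integral_reflectionKernel {X : Type*} [TopologicalSpace X]
    [FirstCountableTopology X] [IsFiniteMeasure μ] [NullSingletonClass μ] {s : Set X} {c e : X → E}
    (hc : ContinuousOn c s) (he : ContinuousOn e s) (he1 : ∀ x ∈ s, ‖e x‖ = 1)
    (hec : ∀ x ∈ s, ⟪e x, c x⟫ = 0) (u : E) :
    ContinuousOn (fun x => ∫ y, reflectionKernel u (c x) (e x) y ∂μ) s := by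
  intro x hx
  refine continuousWithinAt_of_dominated (bound := fun _ => 1 / 2) (.of_forall fun x => ?_) ?_
    (integrable_const _) ?_
  · unfold reflectionKernel
    exact Measurable.aestronglyMeasurable (by fun_prop)
  · filter_upwards [self_mem_nhdsWithin] with z hz
    exact .of_forall (norm_reflectionKernel_le (he1 z hz) (hec z hz) u)
  · filter_upwards [Measure.ae_ne μ u, Measure.ae_ne μ (c x)] with y hyu hyc
    have hyc' : 0 < ‖y - c x‖ := norm_sub_pos_iff.2 hyc
    have hyu' : 0 < ‖u - y‖ := norm_sub_pos_iff.2 hyu.symm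
    have hc := hc x hx
    have he := he x hx
    have hR : ContinuousWithinAt (fun z => (ℝ ∙ e z)ᗮ.reflection y) s x := by
      have hR_eq (z : X) (hz : z ∈ s) :
          (ℝ ∙ e z)ᗮ.reflection y = y - (2 * ⟪e z, y⟫) • e z :=
        reflection_orthogonal_span_singleton_apply (he1 z hz) y
      exact ContinuousWithinAt.congr (by fun_prop) hR_eq (hR_eq x hx)
    unfold reflectionKernel
    exact ContinuousWithinAt.div (by fun_prop) (by fun_prop) (by positivity)

end Reflection

section NormPotential

theorem hasDerivAt_norm_sub {E : Type*} [NormedAddCommGroup E] [InnerProductSpace ℝ E]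
    {c : ℝ → E} {c' y : E} {t : ℝ} (hc : HasDerivAt c c' t) (hy : y ≠ c t) :
    HasDerivAt (fun s => ‖y - c s‖) (-⟪c', y - c t⟫ / ‖y - c t‖) t := by
  have hne : ‖y - c t‖ ≠ 0 := norm_sub_eq_zero_iff.not.2 hy
  have h := ((hc.const_sub y).norm_sq).sqrt (pow_ne_zero 2 hne)
  simp only [Real.sqrt_sq (norm_nonneg _)] at h
  refine h.congr_deriv ?_
  rw [inner_neg_right, real_inner_comm]
  field_simp

variable {E : Type*} [NormedAddCommGroup E] [MeasurableSpace E] {μ : Measure E}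

theorem integrable_norm_sub_of_memLp_two [IsFiniteMeasure μ] (hμ : MemLp id 2 μ) (u : E) :
    Integrable (fun y => ‖u - y‖) μ :=
  (((memLp_const u).sub hμ).integrable one_le_two).norm

theorem integrable_norm_sub_mul_norm_sub [IsFiniteMeasure μ] (hμ : MemLp id 2 μ) (u z : E) :
    Integrable (fun y => ‖u - y‖ * ‖y - z‖) μ :=
  ((memLp_const u).sub hμ).norm.integrable_mul (hμ.sub (memLp_const z)).norm

variable {w : E → ℝ}

theorem continuous_integral_mul_norm_sub (hw : Integrable w μ)
    (hwz : ∀ z, Integrable (fun y => w y * ‖y - z‖) μ) :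
    Continuous fun z => ∫ y, w y * ‖y - z‖ ∂μ := by
  refine (LipschitzWith.of_dist_le_mul (K := (∫ y, ‖w y‖ ∂μ).toNNReal) fun z z' => ?_).continuous
  rw [Real.coe_toNNReal _ (by positivity), dist_eq_norm, ← integral_sub (hwz z) (hwz z'),
    ← integral_mul_const]
  refine norm_integral_le_of_norm_le (hw.norm.mul_const _) (.of_forall fun y => ?_)
  rw [← mul_sub, norm_mul]
  gcongr
  simpa [dist_eq_norm, norm_sub_rev z] using abs_norm_sub_norm_le (y - z) (y - z')

variable [BorelSpace E] [InnerProductSpace ℝ E]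

theorem hasDerivAt_integral_mul_norm_sub [SecondCountableTopology E] [NullSingletonClass μ]
    {c : ℝ → E} {c' : E} {t : ℝ} (hw : Integrable w μ)
    (hwc : Integrable (fun y => w y * ‖y - c t‖) μ) (hc : HasStrictDerivAt c c' t) :
    HasDerivAt (fun s => ∫ y, w y * ‖y - c s‖ ∂μ)
      (∫ y, w y * (-⟪c', y - c t⟫ / ‖y - c t‖) ∂μ) t := by
  obtain ⟨K, s, hs, hK⟩ := hc.hasStrictFDerivAt.exists_lipschitzOnWith
  refine (hasDerivAt_integral_of_dominated_loc_of_lip (bound := fun y => ‖w y‖ * K) hs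
    (.of_forall fun s => ?_) hwc ?_ (.of_forall fun y => ?_) (hw.norm.mul_const _) ?_).2
  · exact hw.aestronglyMeasurable.mul (Continuous.aestronglyMeasurable (by fun_prop))
  · exact hw.aestronglyMeasurable.mul (Measurable.aestronglyMeasurable (by fun_prop))
  · refine LipschitzOnWith.of_dist_le_mul fun a ha b hb => ?_
    rw [dist_eq_norm, ← mul_sub, norm_mul, Real.coe_nnabs, abs_mul, abs_norm, NNReal.abs_eq,
      mul_assoc]
    refine mul_le_mul_of_nonneg_left ?_ (norm_nonneg _)
    calc |‖y - c a‖ - ‖y - c b‖| ≤ ‖(y - c a) - (y - c b)‖ := abs_norm_sub_norm_le _ _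
      _ = dist (c a) (c b) := by rw [sub_sub_sub_cancel_left, dist_comm, dist_eq_norm]
      _ ≤ K * dist a b := hK.dist_le_mul a ha b hb
  · filter_upwards [Measure.ae_ne μ (c t)] with y hy
    exact (hasDerivAt_norm_sub hc.hasDerivAt hy).const_mul _

end NormPotential

section Arc

variable {E : Type*} [NormedAddCommGroup E] [InnerProductSpace ℝ E] {u v : E} {t : ℝ}

/-- The arc of the unit circle in the plane spanned by `u` and `v`, from `-u` through `v` to `u`,
parametrised by the inner product with `u` when `u` and `v` are orthonormal. -/
def arcPoint (u v : E) (t : ℝ) : E := t • u + √(1 - t ^ 2) • v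

/-- The vector obtained by rotating `arcPoint u v t` by a right angle from `u` towards `v`. -/
def arcNormal (u v : E) (t : ℝ) : E := -√(1 - t ^ 2) • u + t • v

theorem continuous_arcPoint (u v : E) : Continuous (arcPoint u v) := by
  unfold arcPoint
  fun_prop

theorem continuous_arcNormal (u v : E) : Continuous (arcNormal u v) := by
  unfold arcNormal
  fun_prop

theorem norm_smul_add_smul_sq (h : Orthonormal ℝ ![u, v]) (a b : ℝ) :
    ‖a • u + b • v‖ ^ 2 = a ^ 2 + b ^ 2 := by
  obtain ⟨hu, huv, hv⟩ : ‖u‖ = 1 ∧ ⟪u, v⟫ = 0 ∧ ‖v‖ = 1 := by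
    simpa [orthonormal_vecCons_iff] using h
  simp [norm_add_sq_real, norm_smul, inner_smul_left, inner_smul_right, hu, huv, hv]

theorem sq_sqrt_one_sub_sq (ht : t ∈ Icc (-1 : ℝ) 1) : √(1 - t ^ 2) ^ 2 = 1 - t ^ 2 :=
  Real.sq_sqrt (by nlinarith [ht.1, ht.2])

theorem norm_arcPoint (h : Orthonormal ℝ ![u, v]) (ht : t ∈ Icc (-1 : ℝ) 1) :
    ‖arcPoint u v t‖ = 1 := by
  rw [← sq_eq_sq₀ (norm_nonneg _) zero_le_one, arcPoint, norm_smul_add_smul_sq h,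
    sq_sqrt_one_sub_sq ht]
  ring

theorem norm_arcNormal (h : Orthonormal ℝ ![u, v]) (ht : t ∈ Icc (-1 : ℝ) 1) :
    ‖arcNormal u v t‖ = 1 := by
  rw [← sq_eq_sq₀ (norm_nonneg _) zero_le_one, arcNormal, norm_smul_add_smul_sq h, neg_sq,
    sq_sqrt_one_sub_sq ht]
  ring

theorem inner_arcNormal_arcPoint (h : Orthonormal ℝ ![u, v]) (t : ℝ) :
    ⟪arcNormal u v t, arcPoint u v t⟫ = 0 := by
  obtain ⟨hu, huv, hv⟩ : ‖u‖ = 1 ∧ ⟪u, v⟫ = 0 ∧ ‖v‖ = 1 := by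
    simpa [orthonormal_vecCons_iff] using h
  have hvu : ⟪v, u⟫ = 0 := by rw [real_inner_comm, huv]
  simp [arcNormal, arcPoint, inner_add_left, inner_add_right, inner_smul_left, inner_smul_right,
    hvu, hu, huv, hv, mul_comm]

theorem inner_arcNormal_left (h : Orthonormal ℝ ![u, v]) (t : ℝ) :
    ⟪arcNormal u v t, u⟫ = -√(1 - t ^ 2) := by
  obtain ⟨hu, huv, -⟩ : ‖u‖ = 1 ∧ ⟪u, v⟫ = 0 ∧ ‖v‖ = 1 := by
    simpa [orthonormal_vecCons_iff] using h
  simp [arcNormal, inner_add_left, inner_smul_left, real_inner_comm u v, hu, huv]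

theorem hasStrictDerivAt_arcPoint (u v : E) (ht : t ∈ Ioo (-1 : ℝ) 1) :
    HasStrictDerivAt (arcPoint u v) (-(√(1 - t ^ 2))⁻¹ • arcNormal u v t) t := by
  have hpos : 0 < 1 - t ^ 2 := by nlinarith [ht.1, ht.2]
  have hs : √(1 - t ^ 2) ≠ 0 := (Real.sqrt_pos.2 hpos).ne'
  have h := ((hasStrictDerivAt_id t).smul_const u).add
    ((((hasStrictDerivAt_pow 2 t).const_sub 1).sqrt hpos.ne').smul_const v)
  refine h.congr_deriv ?_
  rw [arcNormal]
  match_scalars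
  · field_simp
  · field_simp
    ring

variable [MeasurableSpace E] [BorelSpace E] [SecondCountableTopology E] {μ : Measure E}
  [IsFiniteMeasure μ] [NullSingletonClass μ]

theorem hasDerivAt_integral_norm_sub_mul_norm_sub_arcPoint (h : Orthonormal ℝ ![u, v])
    (hμ2 : MemLp id 2 μ) (hμ : ∀ R : E ≃ₗᵢ[ℝ] E, MeasurePreserving R μ μ)
    (ht : t ∈ Ioo (-1 : ℝ) 1) :
    HasDerivAt (fun t => ∫ y, ‖u - y‖ * ‖y - arcPoint u v t‖ ∂μ)
      (2 * ∫ y, reflectionKernel u (arcPoint u v t) (arcNormal u v t) y ∂μ) t := by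
  have hs : √(1 - t ^ 2) ≠ 0 := (Real.sqrt_pos.2 (by nlinarith [ht.1, ht.2])).ne'
  have hec := inner_arcNormal_arcPoint h t
  refine (hasDerivAt_integral_mul_norm_sub (integrable_norm_sub_of_memLp_two hμ2 u)
    (integrable_norm_sub_mul_norm_sub hμ2 u _) (hasStrictDerivAt_arcPoint u v ht)).congr_deriv ?_
  calc ∫ y, ‖u - y‖ * (-⟪-(√(1 - t ^ 2))⁻¹ • arcNormal u v t, y - arcPoint u v t⟫ /
          ‖y - arcPoint u v t‖) ∂μ
      = (√(1 - t ^ 2))⁻¹ *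
          ∫ y, ‖u - y‖ * (⟪arcNormal u v t, y⟫ / ‖y - arcPoint u v t‖) ∂μ := by
        rw [← integral_const_mul]
        congr! 2
        rw [real_inner_smul_left, inner_sub_right, hec]
        ring
    _ = 2 * ∫ y, reflectionKernel u (arcPoint u v t) (arcNormal u v t) y ∂μ := by
        rw [integral_norm_sub_mul_inner_div_norm_sub
          (norm_arcNormal h (Ioo_subset_Icc_self ht)) hec (hμ _)
          (integrable_norm_sub_of_memLp_two hμ2 u), inner_arcNormal_left h]
        field_simp

theorem contDiffOn_integral_norm_sub_mul_norm_sub_arcPoint (h : Orthonormal ℝ ![u, v])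
    (hμ2 : MemLp id 2 μ) (hμ : ∀ R : E ≃ₗᵢ[ℝ] E, MeasurePreserving R μ μ) :
    ContDiffOn ℝ 1 (fun t => ∫ y, ‖u - y‖ * ‖y - arcPoint u v t‖ ∂μ) (Icc (-1) 1) := by
  have hcont : Continuous fun z => ∫ y, ‖u - y‖ * ‖y - z‖ ∂μ :=
    continuous_integral_mul_norm_sub (integrable_norm_sub_of_memLp_two hμ2 u)
      (integrable_norm_sub_mul_norm_sub hμ2 u)
  exact contDiffOn_one_Icc_of_hasDerivAt (by norm_num)
    (hcont.comp (continuous_arcPoint u v)).continuousOn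
    (continuousOn_const.mul <| continuousOn_integral_reflectionKernel
      (continuous_arcPoint u v).continuousOn (continuous_arcNormal u v).continuousOn
      (fun _ => norm_arcNormal h) (fun t _ => inner_arcNormal_arcPoint h t) u)
    fun _ => hasDerivAt_integral_norm_sub_mul_norm_sub_arcPoint h hμ2 hμ

end Arc

theorem kfun_inner {E : Type*} [NormedAddCommGroup E] [InnerProductSpace ℝ E] {x y : E}
    (hx : ‖x‖ = 1) (hy : ‖y‖ = 1) : kfun ⟪x, y⟫ = ‖x - y‖ / (8 * π) := by
  have h : 1 - ⟪x, y⟫ = ‖x - y‖ ^ 2 / 2 := by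
    rw [norm_sub_sq_real, hx, hy]
    ring
  rw [kfun, h, Real.sqrt_div' _ zero_le_two, Real.sqrt_sq (norm_nonneg _), div_div]
  congr 1
  linear_combination (4 * π) * Real.mul_self_sqrt zero_le_two

theorem setIntegral_kfun_mul_kfun {E : Type*} [NormedAddCommGroup E] [InnerProductSpace ℝ E]
    [MeasurableSpace E] [BorelSpace E] (μ : Measure E) {x z : E} (hx : ‖x‖ = 1) (hz : ‖z‖ = 1) :
    ∫ y in sphere (0 : E) 1, kfun ⟪x, y⟫ * kfun ⟪y, z⟫ ∂μ =
      (8 * π)⁻¹ ^ 2 * ∫ y in sphere (0 : E) 1, ‖x - y‖ * ‖y - z‖ ∂μ := by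
  rw [← integral_const_mul]
  refine setIntegral_congr_fun isClosed_sphere.measurableSet fun y hy => ?_
  rw [mem_sphere_zero_iff_norm] at hy
  simp only [kfun_inner hx hy, kfun_inner hy hz]
  ring

theorem stmt_12_general {E : Type*} [NormedAddCommGroup E] [InnerProductSpace ℝ E]
    [FiniteDimensional ℝ E] [MeasurableSpace E] [BorelSpace E] {n : ℕ}
    (hn : finrank ℝ E = n + 1) {u v : E} (h : Orthonormal ℝ ![u, v]) :
    ContDiffOn ℝ 1
      (fun t => ∫ y in sphere (0 : E) 1, kfun ⟪u, y⟫ * kfun ⟪y, arcPoint u v t⟫ ∂μH[n])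
      (Icc (-1) 1) := by
  have hn0 : (0 : ℝ) < n := by
    have := h.linearIndependent.fintype_card_le_finrank
    rw [Fintype.card_fin, hn] at this
    exact_mod_cast (by lia : 0 < n)
  have := Measure.nullSingletonClass_hausdorff E hn0
  have := isFiniteMeasure_restrict.2 (hausdorffMeasure_unitSphere_lt_top hn).ne
  have hid : MemLp id 2 (μH[n].restrict (sphere (0 : E) 1)) :=
    .of_bound aestronglyMeasurable_id 1 <|
      (ae_restrict_mem isClosed_sphere.measurableSet).mono fun _ hy =>
        (mem_sphere_zero_iff_norm.1 hy).le
  exact (contDiffOn_const.mul <| contDiffOn_integral_norm_sub_mul_norm_sub_arcPoint h hid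
    fun R => measurePreserving_restrict_unitSphere R n).congr
    fun t ht => setIntegral_kfun_mul_kfun _ (h.1 0) (norm_arcPoint h ht)

/-- The spherical convolution `k * k` is `C¹` on `[-1,1]`. -/
theorem stmt_12 : ContDiffOn ℝ 1 kConvK (Icc (-1 : ℝ) 1) := by
  have h : Orthonormal ℝ ![aPt, EuclideanSpace.single (1 : Fin 4) (1 : ℝ)] := by
    simp [orthonormal_vecCons_iff, aPt, EuclideanSpace.inner_single_left]
  exact_mod_cast stmt_12_general (n := 3) (by simp) h
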